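/- arXiv:2210.15717 — 6 statements merged into one kernel-verified Lean document; each statement's English description precedes it below -/
import Mathlib

section
/- Let 𝔤 be a completely solvable finite-dimensional real Lie algebra. Then its Killing form B is positive semi-definite: B(u,u) = tr(ad_u ∘ ad_u) ≥ 0 for every u ∈ 𝔤. -/
/-!
Choosing `b i ∈ I (i + 1) \ I i` gives a basis of `L` adapted to the chain of ideals. Since each
`I k` is an ideal, `ad u` is upper triangular in this basis. The diagonal of the square of an upper
triangular real matrix consists of the squares of the diagonal entries, so `tr (ad u ∘ ad u)` is a
sum of squares.

The basis property and the triangularity both come from `coeff_eq_zero_of_mem`: a linear combination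
of the `b i` lying in the `k`-th step of the chain involves only the `b j` with `j < k`.
-/

/-- Applied to `0 ∈ W 0`, this gives the linear independence of the `b i`. -/
lemma coeff_eq_zero_of_mem {V : Type*} [AddCommGroup V] [Module ℝ V] {n : ℕ}
    {W : Fin (n + 1) → Submodule ℝ V} (hW : Monotone W) {b : Fin n → V}
    (hb : ∀ i, b i ∈ W i.succ) (hb' : ∀ i, b i ∉ W i.castSucc)
    (g : Fin n → ℝ) (k : Fin (n + 1)) (hg : ∑ i, g i • b i ∈ W k)
    (j : Fin n) (hj : k ≤ j.castSucc) : g j = 0 := by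
  classical
  -- Otherwise the last index `m` with a nonzero coefficient satisfies `k ≤ m`, and solving for
  -- `b m` puts it in `W m`.
  by_contra hne
  obtain ⟨m, hm, hmax⟩ := (Finset.univ.filter fun i => g i ≠ 0).exists_max_image id
    ⟨j, by simpa using hne⟩
  simp only [Finset.mem_filter, Finset.mem_univ, true_and, id] at hm hmax
  have hkm : k ≤ m.castSucc := hj.trans (Fin.castSucc_le_castSucc_iff.mpr (hmax j hne))
  have hrest : ∑ i ∈ Finset.univ.erase m, g i • b i ∈ W m.castSucc := by
    refine Submodule.sum_mem _ fun i hi => ?_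
    by_cases h0 : g i = 0
    · simp [h0]
    · have hlt : i < m := lt_of_le_of_ne (hmax i h0) (Finset.ne_of_mem_erase hi)
      exact Submodule.smul_mem _ _ (hW (Fin.succ_le_castSucc_iff.mpr hlt) (hb i))
  rw [← Finset.add_sum_erase _ _ (Finset.mem_univ m)] at hg
  have hgm : g m • b m ∈ W m.castSucc := (Submodule.add_mem_iff_left _ hrest).mp (hW hkm hg)
  exact hb' m ((Submodule.smul_mem_iff _ hm).mp hgm)

/-- An endomorphism preserving a complete flag is upper triangular in an adapted basis, so the trace
of its square is a sum of squares. -/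
lemma trace_sq_nonneg_of_flag {V : Type*} [AddCommGroup V] [Module ℝ V] [FiniteDimensional ℝ V]
    {n : ℕ} (hn : Module.finrank ℝ V = n) {W : Fin (n + 1) → Submodule ℝ V} (hW : Monotone W)
    (hdim : ∀ i, Module.finrank ℝ (W i) = (i : ℕ))
    (f : V →ₗ[ℝ] V) (hf : ∀ i, ∀ x ∈ W i, f x ∈ W i) :
    0 ≤ LinearMap.trace ℝ V (f ∘ₗ f) := by
  have hex : ∀ i : Fin n, ∃ x ∈ W i.succ, x ∉ W i.castSucc := fun i => by
    by_contra! h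
    have := Submodule.finrank_mono (show W i.succ ≤ W i.castSucc from h)
    simp [hdim] at this
  choose b hb hb' using hex
  have hli : LinearIndependent ℝ b := Fintype.linearIndependent_iff.mpr fun g hg i =>
    coeff_eq_zero_of_mem hW hb hb' g 0 (by simp [hg]) i (Fin.zero_le _)
  let B : Module.Basis (Fin n) ℝ V :=
    basisOfLinearIndependentOfCardEqFinrank' b hli (by simp [hn])
  have hB : ∀ i, B i = b i := fun i => by simp [B]
  have htri : ∀ i j : Fin n, i < j → LinearMap.toMatrix B B f j i = 0 := by
    intro i j hij
    rw [LinearMap.toMatrix_apply]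
    refine coeff_eq_zero_of_mem hW hb hb' (B.repr (f (B i))) i.succ ?_ j
      (Fin.succ_le_castSucc_iff.mpr hij)
    have hs := B.sum_repr (f (B i))
    simp only [hB] at hs ⊢
    rw [hs]
    exact hf _ _ (hb i)
  rw [LinearMap.trace_eq_matrix_trace ℝ B, LinearMap.toMatrix_comp B B B, Matrix.trace]
  refine Finset.sum_nonneg fun i _ => ?_
  rw [Matrix.diag_apply, Matrix.mul_apply]
  -- An off-diagonal term `M i j * M j i` has one factor below the diagonal.
  refine Finset.sum_nonneg fun j _ => ?_
  rcases lt_trichotomy i j with h | rfl | h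
  · simp [htri i j h]
  · exact mul_self_nonneg _
  · simp [htri j i h]

/-- The Killing form of a completely solvable finite-dimensional real Lie
algebra (one admitting a chain of Lie ideals `0 = I₀ ⊆ I₁ ⊆ … ⊆ Iₙ = 𝔤` with
`dim Iᵢ = i`) is positive semi-definite. -/
theorem killingForm_nonneg_of_completelySolvable
    {L : Type*} [LieRing L] [LieAlgebra ℝ L] [FiniteDimensional ℝ L]
    (n : ℕ) (hn : Module.finrank ℝ L = n)
    (I : Fin (n + 1) → LieIdeal ℝ L)
    (hmono : Monotone I)
    (hbot : I 0 = ⊥) (htop : I (Fin.last n) = ⊤)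
    (hdim : ∀ i, Module.finrank ℝ (I i).toSubmodule = (i : ℕ)) :
    ∀ u : L, 0 ≤ killingForm ℝ L u u := by
  intro u
  rw [killingForm_apply_apply]
  exact trace_sq_nonneg_of_flag hn (W := fun i => (I i).toSubmodule) (fun _ _ h => hmono h)
    hdim (LieAlgebra.ad ℝ L u) fun i x hx => (I i).lie_mem hx
end

section
/- Let (𝔤,⟨·,·⟩) be a pseudo-Euclidean unimodular Lie algebra and let D be a derivation of 𝔤. Then tr(Ric ∘ D) = 0, where Ric is the Ricci operator of (𝔤,⟨·,·⟩). -/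
/-!
Fix a basis `b` of `𝔤` and its `g`-dual basis `c`, so that `tr A = ∑ᵢ g (A bᵢ) cᵢ`. The trace of
`Ric ∘ D` is then the sum over `u = D bᵢ`, `v = cᵢ` of the three terms defining `g (Ric u) v`.

* The Killing form `K` satisfies `K (D u) v = -K u (D v)`, since `ad (D u) = [D, ad u]`. As
  `∑ᵢ T bᵢ cᵢ = ∑ᵢ T cᵢ bᵢ` for every bilinear `T`, the sum `∑ᵢ K (D bᵢ) cᵢ` equals its own opposite
  and vanishes.
* The second term contributes `-S / 2` with `S = ∑ᵢⱼ g ⁅D bᵢ, bⱼ⁆ ⁅cᵢ, cⱼ⁆`.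
* Since `g (J_u x) y = g u ⁅x, y⁆`, one has `tr (J_u ∘ J_v) = -∑ⱼₖ g v ⁅bⱼ, bₖ⁆ * g u ⁅cⱼ, cₖ⁆`, whose
  sum over `i` is `-∑ⱼₖ g (D ⁅bⱼ, bₖ⁆) ⁅cⱼ, cₖ⁆ = -2 S` by the Leibniz rule. The third term thus
  contributes `S / 2`, which cancels the second one.
-/

section DualFrames

variable {L ι : Type*} [AddCommGroup L] [Module ℝ L] [Fintype ι]

/-- The contraction of a bilinear map with the inverse metric does not depend on the order of its
arguments. -/
lemma sum_frame_swap (g : LinearMap.BilinForm ℝ L) (hsymm : ∀ u v, g u v = g v u)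
    (b c : ι → L) (hexp : ∀ x, ∑ i, g (c i) x • b i = x) (T : LinearMap.BilinForm ℝ L) :
    ∑ i, T (b i) (c i) = ∑ i, T (c i) (b i) := by
  have h1 : ∀ i, T (b i) (c i) = ∑ j, g (c j) (c i) * T (b i) (b j) := fun i => by
    conv_lhs => rw [← hexp (c i)]
    simp [map_sum]
  have h2 : ∀ i, T (c i) (b i) = ∑ j, g (c j) (c i) * T (b j) (b i) := fun i => by
    conv_lhs => rw [← hexp (c i)]
    simp [map_sum]
  simp_rw [h1, h2]
  rw [Finset.sum_comm]
  exact Finset.sum_congr rfl fun i _ => Finset.sum_congr rfl fun j _ => by rw [hsymm]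

/-- Existence of a basis together with its dual basis for a nondegenerate symmetric form, with the
resulting expansion of vectors and formula for the trace. -/
lemma exists_dual_frames [FiniteDimensional ℝ L] (g : LinearMap.BilinForm ℝ L)
    (hsymm : ∀ u v, g u v = g v u) (hnd : ∀ u : L, (∀ v, g u v = 0) → u = 0) :
    ∃ b c : Fin (Module.finrank ℝ L) → L,
      (∀ x, ∑ i, g (c i) x • b i = x) ∧
      (∀ A : L →ₗ[ℝ] L, LinearMap.trace ℝ L A = ∑ i, g (A (b i)) (c i)) := by
  have hg : g.Nondegenerate :=
    ⟨hnd, fun u h => hnd u fun v => by rw [hsymm]; exact h v⟩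
  let b := Module.finBasis ℝ L
  have hrepr : ∀ i x, g (g.dualBasis hg b i) x = b.repr x i := fun i x => by
    conv_lhs => rw [← b.sum_repr x]
    simp only [map_sum, map_smul, LinearMap.BilinForm.apply_dualBasis_left]
    simp
  refine ⟨b, g.dualBasis hg b, fun x => ?_, fun A => ?_⟩
  · simp_rw [hrepr]
    exact b.sum_repr x
  · rw [LinearMap.trace_eq_matrix_trace ℝ b, Matrix.trace]
    refine Finset.sum_congr rfl fun i _ => ?_
    rw [hsymm, hrepr, Matrix.diag_apply, LinearMap.toMatrix_apply]

end DualFrames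

/-- Derivations are skew with respect to the Killing form. -/
lemma killingForm_derivation_skew {L : Type*} [LieRing L] [LieAlgebra ℝ L] [FiniteDimensional ℝ L]
    (D : L →ₗ[ℝ] L) (hD : ∀ u v, D ⁅u, v⁆ = ⁅D u, v⁆ + ⁅u, D v⁆) (u v : L) :
    killingForm ℝ L (D u) v = -killingForm ℝ L u (D v) := by
  have had : ∀ w, LieAlgebra.ad ℝ L (D w) =
      D ∘ₗ LieAlgebra.ad ℝ L w - LieAlgebra.ad ℝ L w ∘ₗ D := fun w => by
    ext x
    simp [hD]
  rw [killingForm_apply_apply, killingForm_apply_apply, had u, had v]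
  simp only [LinearMap.sub_comp, LinearMap.comp_sub, map_sub, LinearMap.comp_assoc]
  rw [LinearMap.trace_comp_comm' _ D, LinearMap.comp_assoc]
  ring

/-- Let `(𝔤, g)` be a pseudo-Euclidean unimodular Lie algebra with Ricci
operator `Ric`, and let `D` be a derivation of `𝔤`.  Then `tr(Ric ∘ D) = 0`. -/
theorem trace_Ric_comp_derivation
    {L : Type*} [LieRing L] [LieAlgebra ℝ L] [FiniteDimensional ℝ L]
    (g : LinearMap.BilinForm ℝ L)
    (hsymm : ∀ u v, g u v = g v u)
    (hnd : ∀ u : L, (∀ v, g u v = 0) → u = 0)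
    (hunim : ∀ u : L, LinearMap.trace ℝ L (LieAlgebra.ad ℝ L u) = 0)
    (adStar : L → (L →ₗ[ℝ] L))
    (hadStar : ∀ v x y, g ⁅v, x⁆ y = g x (adStar v y))
    (J : L → (L →ₗ[ℝ] L))
    (hJ : ∀ u v, J u v = adStar v u)
    (Ric : L →ₗ[ℝ] L)
    (hRic : ∀ u v, g (Ric u) v =
      -(1/2) * LinearMap.trace ℝ L (LieAlgebra.ad ℝ L u ∘ₗ LieAlgebra.ad ℝ L v)
      - (1/2) * LinearMap.trace ℝ L (LieAlgebra.ad ℝ L u ∘ₗ adStar v)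
      - (1/4) * LinearMap.trace ℝ L (J u ∘ₗ J v))
    (D : L →ₗ[ℝ] L)
    (hD : ∀ u v, D ⁅u, v⁆ = ⁅D u, v⁆ + ⁅u, D v⁆) :
    LinearMap.trace ℝ L (Ric ∘ₗ D) = 0 := by
  obtain ⟨b, c, hexp, htr⟩ := exists_dual_frames g hsymm hnd
  have hexp' : ∀ x y, g x y = ∑ i, g (c i) x * g (b i) y := fun x y => by
    conv_lhs => rw [← hexp x]
    simp [map_sum]
  -- this sum is equal to its own opposite
  have hK : ∑ i, killingForm ℝ L (D (b i)) (c i) = 0 := by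
    have h := sum_frame_swap g hsymm b c hexp ((killingForm ℝ L).compl₂ D)
    simp only [LinearMap.compl₂_apply] at h
    have h1 : ∀ i, killingForm ℝ L (D (b i)) (c i) = -killingForm ℝ L (b i) (D (c i)) :=
      fun i => killingForm_derivation_skew D hD _ _
    have h2 : ∀ i, killingForm ℝ L (c i) (D (b i)) = killingForm ℝ L (D (b i)) (c i) :=
      fun i => LieModule.traceForm_comm ℝ L L _ _
    simp_rw [h2] at h
    have h3 := Finset.sum_congr (rfl : Finset.univ = Finset.univ) fun i _ => h1 i
    rw [Finset.sum_neg_distrib] at h3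
    linarith
  have hS : ∀ u v, LinearMap.trace ℝ L (LieAlgebra.ad ℝ L u ∘ₗ adStar v) =
      ∑ j, g ⁅u, b j⁆ ⁅v, c j⁆ := fun u v => by
    rw [LinearMap.trace_comp_comm', htr]
    refine Finset.sum_congr rfl fun j _ => ?_
    rw [hsymm, LinearMap.comp_apply, ← hadStar, hsymm, LieAlgebra.ad_apply]
  have hJg : ∀ u x y, g (J u x) y = g u ⁅x, y⁆ := fun u x y => by
    rw [hJ, hsymm, ← hadStar, hsymm]
  have hJJ : ∀ u v, LinearMap.trace ℝ L (J u ∘ₗ J v) =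
      -∑ j, ∑ k, g v ⁅b j, b k⁆ * g u ⁅c j, c k⁆ := fun u v => by
    rw [htr, ← Finset.sum_neg_distrib]
    refine Finset.sum_congr rfl fun j _ => ?_
    rw [LinearMap.comp_apply, hJg, ← lie_skew, map_neg, ← hJg, hexp']
    refine congrArg _ (Finset.sum_congr rfl fun k _ => ?_)
    rw [hsymm (c k), hJg, hsymm (b k), hJg, mul_comm]
  -- summing the third term over `i` reassembles `D ⁅b j, b k⁆`
  have hJsum : ∑ i, ∑ j, ∑ k, g (c i) ⁅b j, b k⁆ * g (D (b i)) ⁅c j, c k⁆ =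
      ∑ j, ∑ k, g (D ⁅b j, b k⁆) ⁅c j, c k⁆ := by
    rw [Finset.sum_comm]
    refine Finset.sum_congr rfl fun j _ => ?_
    rw [Finset.sum_comm]
    refine Finset.sum_congr rfl fun k _ => ?_
    conv_rhs => rw [← hexp ⁅b j, b k⁆]
    simp [map_sum]
  have hLeib : ∑ j, ∑ k, g (D ⁅b j, b k⁆) ⁅c j, c k⁆ =
      2 * ∑ i, ∑ j, g ⁅D (b i), b j⁆ ⁅c i, c j⁆ := by
    have h : ∑ j, ∑ k, g ⁅b j, D (b k)⁆ ⁅c j, c k⁆ =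
        ∑ i, ∑ j, g ⁅D (b i), b j⁆ ⁅c i, c j⁆ := by
      rw [Finset.sum_comm]
      refine Finset.sum_congr rfl fun k _ => Finset.sum_congr rfl fun j _ => ?_
      rw [← lie_skew (D (b k)), ← lie_skew (c k), map_neg, map_neg, LinearMap.neg_apply, neg_neg]
    simp only [hD, map_add, LinearMap.add_apply, Finset.sum_add_distrib, h]
    ring
  rw [htr]
  simp only [LinearMap.comp_apply, hRic, ← killingForm_apply_apply, hS, hJJ,
    Finset.sum_sub_distrib, ← Finset.mul_sum, Finset.sum_neg_distrib, hK, hJsum, hLeib]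
  ring
end

section
/- Let (𝔤,⟨·,·⟩) be a pseudo-Euclidean unimodular Lie algebra admitting a derivation D with tr(D) ≠ 0. Then (𝔤,⟨·,·⟩) is Einstein if and only if it is Ricci-flat. -/
/-!
Every derivation `D` satisfies `tr (Ric ∘ D) = 0`; when `Ric = lam • id` this reads
`lam * tr D = 0`, so `lam = 0`.

For the vanishing, fix a `g`-orthogonal basis `b` and put `w i = 1 / g (b i) (b i)`, so that
`tr F = ∑ i, w i * g (F (b i)) (b i)` for every endomorphism `F`. The trace of `Ric ∘ D` splits into
three sums according to the formula for `Ric`. The Killing sum vanishes term by term, because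
`ad (D u) = [D, ad u]` and the trace is cyclic. The second sum is
`T = ∑ i j, w i * w j * g ⁅D (b i), b j⁆ ⁅b i, b j⁆`, and the third is
`-∑ i j, w i * w j * g (D ⁅b i, b j⁆) ⁅b i, b j⁆`, which the Leibniz rule and the antisymmetry of the
bracket turn into `-2 T`. As `-1/2 T - 1/4 (-2 T) = 0`, the last two contributions cancel.
-/

/-- An orthogonal basis, packaged as a trace formula: the weight `w i` is the inverse of
`g (b i) (b i)`, which is nonzero by nondegeneracy. -/
lemma exists_basis_trace_formula {V : Type*} [AddCommGroup V] [Module ℝ V] [FiniteDimensional ℝ V]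
    (g : LinearMap.BilinForm ℝ V) (hsymm : ∀ u v, g u v = g v u)
    (hnd : ∀ u : V, (∀ v, g u v = 0) → u = 0) :
    ∃ (n : ℕ) (b : Fin n → V) (w : Fin n → ℝ),
      ∀ F : V →ₗ[ℝ] V, LinearMap.trace ℝ V F = ∑ i, w i * g (F (b i)) (b i) := by
  obtain ⟨b, hb⟩ := LinearMap.BilinForm.exists_orthogonal_basis (B := g) ⟨fun u v => hsymm u v⟩
  have hne : ∀ i, g (b i) (b i) ≠ 0 := by
    intro i h
    apply b.ne_zero i
    apply hnd
    intro v
    rw [← b.sum_repr v, map_sum]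
    refine Finset.sum_eq_zero fun j _ => ?_
    rw [map_smul]
    by_cases hij : i = j
    · rw [← hij, h, smul_zero]
    · have h0 : g (b i) (b j) = 0 := hb hij
      rw [h0, smul_zero]
  refine ⟨_, b, fun i => (g (b i) (b i))⁻¹, fun F => ?_⟩
  rw [LinearMap.trace_eq_matrix_trace ℝ b, Matrix.trace]
  refine Finset.sum_congr rfl fun i _ => ?_
  have key : ∀ x, g x (b i) = b.repr x i * g (b i) (b i) := by
    intro x
    conv_lhs => rw [← b.sum_repr x, map_sum, LinearMap.sum_apply]
    rw [Finset.sum_eq_single i]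
    · simp
    · intro j _ hj
      have h0 : g (b j) (b i) = 0 := hb hj
      simp [h0]
    · simp
  rw [key, Matrix.diag_apply, LinearMap.toMatrix_apply]
  have := hne i
  field_simp

/-- The Killing form `K` satisfies `K (D u, u) = 0` for every derivation `D`, since
`ad (D u) = D ∘ ad u - ad u ∘ D` and the trace is cyclic. -/
lemma trace_ad_derivation_comp_ad_self {L : Type*} [LieRing L] [LieAlgebra ℝ L]
    (D : L →ₗ[ℝ] L) (hD : ∀ u v, D ⁅u, v⁆ = ⁅D u, v⁆ + ⁅u, D v⁆) (u : L) :
    LinearMap.trace ℝ L (LieAlgebra.ad ℝ L (D u) ∘ₗ LieAlgebra.ad ℝ L u) = 0 := by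
  have h : LieAlgebra.ad ℝ L (D u) ∘ₗ LieAlgebra.ad ℝ L u =
      D * (LieAlgebra.ad ℝ L u * LieAlgebra.ad ℝ L u) -
        LieAlgebra.ad ℝ L u * D * LieAlgebra.ad ℝ L u := by
    ext x
    simp [hD]
  rw [h, map_sub, LinearMap.trace_mul_cycle', ← mul_assoc, sub_self]

/-- Double sums of `g (D ⁅b i, b j⁆) ⁅b i, b j⁆` with weights `w i * w j`: the two Leibniz terms
contribute equally, by exchanging the indices and using antisymmetry twice. -/
lemma sum_derivation_bracket {L : Type*} [LieRing L] [LieAlgebra ℝ L]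
    (g : LinearMap.BilinForm ℝ L) (D : L →ₗ[ℝ] L)
    (hD : ∀ u v, D ⁅u, v⁆ = ⁅D u, v⁆ + ⁅u, D v⁆) {n : ℕ} (b : Fin n → L) (w : Fin n → ℝ) :
    ∑ i, ∑ j, w i * (w j * g (D ⁅b i, b j⁆) ⁅b i, b j⁆) =
      2 * ∑ i, ∑ j, w i * (w j * g ⁅D (b i), b j⁆ ⁅b i, b j⁆) := by
  have hswap : ∑ i, ∑ j, w i * (w j * g ⁅b i, D (b j)⁆ ⁅b i, b j⁆) =
      ∑ i, ∑ j, w i * (w j * g ⁅D (b i), b j⁆ ⁅b i, b j⁆) := by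
    rw [Finset.sum_comm]
    refine Finset.sum_congr rfl fun i _ => Finset.sum_congr rfl fun j _ => ?_
    rw [← lie_skew (b j) (D (b i)), ← lie_skew (b j) (b i)]
    simp only [map_neg, LinearMap.neg_apply]
    ring
  rw [two_mul]
  nth_rewrite 2 [← hswap]
  simp only [← Finset.sum_add_distrib, hD, map_add, LinearMap.add_apply, mul_add]

/-- A pseudo-Euclidean unimodular Lie algebra admitting a derivation with
nonzero trace is Einstein if and only if it is Ricci-flat. -/
theorem einstein_iff_ricciFlat_of_derivation_trace_ne_zero
    {L : Type*} [LieRing L] [LieAlgebra ℝ L] [FiniteDimensional ℝ L]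
    (g : LinearMap.BilinForm ℝ L)
    (hsymm : ∀ u v, g u v = g v u)
    (hnd : ∀ u : L, (∀ v, g u v = 0) → u = 0)
    (hunim : ∀ u : L, LinearMap.trace ℝ L (LieAlgebra.ad ℝ L u) = 0)
    (adStar : L → (L →ₗ[ℝ] L))
    (hadStar : ∀ v x y, g ⁅v, x⁆ y = g x (adStar v y))
    (J : L → (L →ₗ[ℝ] L))
    (hJ : ∀ u v, J u v = adStar v u)
    (Ric : L →ₗ[ℝ] L)
    (hRic : ∀ u v, g (Ric u) v =
      -(1/2) * LinearMap.trace ℝ L (LieAlgebra.ad ℝ L u ∘ₗ LieAlgebra.ad ℝ L v)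
      - (1/2) * LinearMap.trace ℝ L (LieAlgebra.ad ℝ L u ∘ₗ adStar v)
      - (1/4) * LinearMap.trace ℝ L (J u ∘ₗ J v))
    (D : L →ₗ[ℝ] L)
    (hD : ∀ u v, D ⁅u, v⁆ = ⁅D u, v⁆ + ⁅u, D v⁆)
    (htrD : LinearMap.trace ℝ L D ≠ 0) :
    (∃ lam : ℝ, Ric = lam • LinearMap.id) ↔ Ric = 0 := by
  constructor
  swap
  · intro h
    exact ⟨0, by rw [h, zero_smul]⟩
  rintro ⟨lam, hlam⟩
  obtain ⟨n, b, w, htr⟩ := exists_basis_trace_formula g hsymm hnd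
  have hadj : ∀ v x y, g (adStar v y) x = g y ⁅v, x⁆ := fun v x y => by
    rw [hsymm, ← hadStar, hsymm]
  have hT2 : ∀ u v, LinearMap.trace ℝ L (LieAlgebra.ad ℝ L u ∘ₗ adStar v) =
      ∑ j, w j * g ⁅u, b j⁆ ⁅v, b j⁆ := by
    intro u v
    rw [LinearMap.trace_comp_comm', htr]
    refine Finset.sum_congr rfl fun j _ => ?_
    rw [LinearMap.comp_apply, hadj, LieAlgebra.ad_apply]
  -- The pairing of `J u ∘ J v` with `x` is rewritten by moving both adjoints onto brackets.
  have hJJ : ∀ u v x, g ((J u ∘ₗ J v) x) x = - g ⁅x, adStar x u⁆ v := by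
    intro u v x
    rw [LinearMap.comp_apply, hJ, hJ, hadj, ← lie_skew, map_neg, hsymm u, hadStar,
      hsymm (adStar x v), hadStar]
  have hT3 : ∑ i, w i * LinearMap.trace ℝ L (J (D (b i)) ∘ₗ J (b i)) =
      - ∑ j, ∑ i, w j * (w i * g (D ⁅b j, b i⁆) ⁅b j, b i⁆) := by
    calc ∑ i, w i * LinearMap.trace ℝ L (J (D (b i)) ∘ₗ J (b i))
        = - ∑ j, w j * LinearMap.trace ℝ L
            (LieAlgebra.ad ℝ L (b j) ∘ₗ (adStar (b j) ∘ₗ D)) := by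
          simp only [htr, hJJ, Finset.mul_sum]
          rw [Finset.sum_comm, ← Finset.sum_neg_distrib]
          refine Finset.sum_congr rfl fun j _ => ?_
          rw [← Finset.sum_neg_distrib]
          refine Finset.sum_congr rfl fun i _ => ?_
          simp only [LinearMap.comp_apply, LieAlgebra.ad_apply]
          ring
      _ = _ := by
          refine congrArg Neg.neg (Finset.sum_congr rfl fun j _ => ?_)
          rw [LinearMap.trace_comp_comm', htr, Finset.mul_sum]
          refine Finset.sum_congr rfl fun i _ => ?_
          simp only [LinearMap.comp_apply, LieAlgebra.ad_apply, hadj]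
  have hzero : LinearMap.trace ℝ L (Ric ∘ₗ D) = 0 := by
    have hsplit : LinearMap.trace ℝ L (Ric ∘ₗ D) =
        -(1/2) * ∑ i, ∑ j, w i * (w j * g ⁅D (b i), b j⁆ ⁅b i, b j⁆)
        - (1/4) * ∑ i, w i * LinearMap.trace ℝ L (J (D (b i)) ∘ₗ J (b i)) := by
      rw [htr, Finset.mul_sum, Finset.mul_sum, ← Finset.sum_sub_distrib]
      refine Finset.sum_congr rfl fun i _ => ?_
      rw [LinearMap.comp_apply, hRic, trace_ad_derivation_comp_ad_self D hD, hT2,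
        ← Finset.mul_sum]
      ring
    rw [hsplit, hT3, sum_derivation_bracket g D hD]
    ring
  have hlam0 : lam * LinearMap.trace ℝ L D = 0 := by
    rw [← hzero, hlam, LinearMap.smul_comp, LinearMap.id_comp, map_smul, smul_eq_mul]
  rw [hlam, (mul_eq_zero.mp hlam0).resolve_right htrD, zero_smul]
end

section
/- Let (𝔤₀,[·,·]₀,⟨·,·⟩₀) be a Euclidean Lie algebra and let (𝔤,[·,·],⟨·,·⟩) be the double extension of 𝔤₀ with parameters (K,D,μ,b). Define the 2-form ω on 𝔤₀ by ω(u,v) = ⟨K(u),v⟩₀. Then the bracket [·,·] satisfies the Jacobi identity (i.e. (𝔤,[·,·]) is a Lie algebra) if and only if: D is a derivation of (𝔤₀,[·,·]₀), ω is a 2-cocycle (ω([u,v]₀,w) + ω([v,w]₀,u) + ω([w,u]₀,v) = 0 for all u,v,w ∈ 𝔤₀), and K∘D + D*∘K = μK + J_b⁰, where J_b⁰ is the endomorphism of 𝔤₀ given by J_b⁰(v) = (ad⁰_v)*(b). -/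
/-!
The identity `K ∘ D + D* ∘ K = μ K + J_b` is equivalent, by nondegeneracy of `g0`, skewness of `K` and
the definitions of `D*` and `J_b`, to its weak form
`g0 (K (D u)) v - g0 (K (D v)) u = μ * g0 (K u) v + g0 b ⁅u, v⁆` for all `u, v`.

The Jacobi identity on `(ē, u, v)` with `u, v ∈ 𝔤₀` has as its `𝔤₀`-component the derivation
property of `D`, and as its `e`-component this weak form. On three elements of `𝔤₀` the `e`-component is
the cocycle condition. Conversely, the Jacobiator of three general elements is a combination of
these three identities and the Jacobi identity of `𝔤₀`; the remaining terms, which are quadratic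
in the `ē`-coordinates, cancel in the cyclic sum.
-/

/-- Let `(𝔤₀, [·,·]₀, g₀)` be a Euclidean Lie algebra and let
`𝔤 = ℝe ⊕ 𝔤₀ ⊕ ℝē` (realized as `ℝ × 𝔤₀ × ℝ` with `e = (1,0,0)`,
`ē = (0,0,1)`) carry the double extension bracket with parameters
`(K, D, μ, b)`.  Then the bracket satisfies the Jacobi identity iff `D` is a
derivation, `ω(u,v) = g₀(K u, v)` is a 2-cocycle, and
`K∘D + D*∘K = μK + J_b⁰`. -/
theorem doubleExtension_jacobi_iff
    {L0 : Type*} [LieRing L0] [LieAlgebra ℝ L0] [FiniteDimensional ℝ L0]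
    (g0 : LinearMap.BilinForm ℝ L0)
    (hg0symm : ∀ u v, g0 u v = g0 v u)
    (hg0pos : ∀ u : L0, u ≠ 0 → 0 < g0 u u)
    (K D : L0 →ₗ[ℝ] L0)
    (hKskew : ∀ u v, g0 (K u) v = - g0 u (K v))
    (μ : ℝ) (b : L0)
    (br : (ℝ × L0 × ℝ) → (ℝ × L0 × ℝ) → (ℝ × L0 × ℝ))
    (hbr : ∀ (a : ℝ) (u : L0) (t : ℝ) (a' : ℝ) (u' : L0) (t' : ℝ),
      br (a, u, t) (a', u', t') =
        (t * (μ * a' + g0 b u') - t' * (μ * a + g0 b u) + g0 (K u) u',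
          t • D u' - t' • D u + ⁅u, u'⁆, 0))
    (Dstar : L0 →ₗ[ℝ] L0)
    (hDstar : ∀ u v, g0 (D u) v = g0 u (Dstar v))
    (Jb : L0 →ₗ[ℝ] L0)
    (hJb : ∀ v w, g0 (Jb v) w = g0 b ⁅v, w⁆) :
    (∀ x y z : ℝ × L0 × ℝ, br (br x y) z + br (br y z) x + br (br z x) y = 0) ↔
      ((∀ u v, D ⁅u, v⁆ = ⁅D u, v⁆ + ⁅u, D v⁆) ∧
        (∀ u v w : L0, g0 (K ⁅u, v⁆) w + g0 (K ⁅v, w⁆) u + g0 (K ⁅w, u⁆) v = 0) ∧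
        K ∘ₗ D + Dstar ∘ₗ K = μ • K + Jb) := by
  -- The endomorphism identity, tested against an arbitrary vector.
  have hweak : K ∘ₗ D + Dstar ∘ₗ K = μ • K + Jb ↔
      ∀ u v, g0 (K (D u)) v - g0 (K (D v)) u = μ * g0 (K u) v + g0 b ⁅u, v⁆ := by
    have hpair : ∀ u v, g0 (Dstar (K u)) v = - g0 (K (D v)) u := by
      intro u v
      rw [hg0symm, ← hDstar, hKskew, neg_neg]
    constructor
    · intro h u v
      have h1 := congrArg (fun F : L0 →ₗ[ℝ] L0 => g0 (F u) v) h
      simp only [LinearMap.add_apply, LinearMap.comp_apply, LinearMap.smul_apply, map_add,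
        map_smul, smul_eq_mul, hpair, hJb] at h1
      linarith
    · intro h
      ext u
      by_contra hne
      have hpos := hg0pos _ (sub_ne_zero.mpr hne)
      have hzero : ∀ v, g0 ((K ∘ₗ D + Dstar ∘ₗ K) u - (μ • K + Jb) u) v = 0 := by
        intro v
        simp only [LinearMap.add_apply, LinearMap.comp_apply, LinearMap.smul_apply, map_add,
          map_sub, LinearMap.sub_apply, map_smul, smul_eq_mul, hpair, hJb]
        linarith [h u v]
      exact hpos.ne' (hzero _)
  rw [hweak]
  constructor
  · intro h
    refine ⟨fun u v => ?_, fun u v w => ?_, fun u v => ?_⟩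
    · have h1 := congrArg (fun p => p.2.1) (h (0, 0, 1) (0, u, 0) (0, v, 0))
      simp [hbr] at h1
      rw [← sub_eq_zero, ← neg_eq_zero, ← h1]
      abel
    · have h1 := congrArg Prod.fst (h (0, u, 0) (0, v, 0) (0, w, 0))
      simpa [hbr] using h1
    · have h1 := congrArg Prod.fst (h (0, 0, 1) (0, u, 0) (0, v, 0))
      simp [hbr] at h1
      linarith
  · rintro ⟨hD, hω, hE⟩ ⟨a, u, t⟩ ⟨a', u', t'⟩ ⟨a'', u'', t''⟩
    simp only [hbr, Prod.mk_add_mk]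
    refine Prod.ext ?_ (Prod.ext ?_ ?_)
    · simp only [map_add, map_sub, map_smul, LinearMap.add_apply, LinearMap.sub_apply,
        LinearMap.smul_apply, smul_eq_mul, Prod.fst_zero]
      linear_combination hω u u' u'' + t * hE u' u'' + t' * hE u'' u + t'' * hE u u'
    · have hJ : ⁅⁅u, u'⁆, u''⁆ + ⁅⁅u', u''⁆, u⁆ + ⁅⁅u'', u⁆, u'⁆ = 0 := by
        rw [← lie_skew ⁅u, u'⁆, ← lie_skew ⁅u', u''⁆, ← lie_skew ⁅u'', u⁆, ← neg_eq_zero,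
          ← lie_jacobi u u' u'']
        abel
      simp only [map_add, map_sub, map_smul, hD, add_lie, sub_lie, smul_lie, zero_smul, zero_sub,
        Prod.fst_zero, Prod.snd_zero]
      rw [← lie_skew u (D u'), ← lie_skew u' (D u''), ← lie_skew u'' (D u)]
      rw [← hJ]
      module
    · simp
end

section
/- Let (𝔤₀,[·,·]₀,⟨·,·⟩₀) be a Euclidean Lie algebra and let (𝔤,[·,·],⟨·,·⟩) be the double extension of 𝔤₀ with parameters (K,D,μ,b), assumed to be a Lie algebra. Let H ∈ 𝔤 and H⁰ ∈ 𝔤₀ be determined by ⟨H,u⟩ = tr(ad_u) for all u ∈ 𝔤 and ⟨H⁰,v⟩₀ = tr(ad⁰_v) for all v ∈ 𝔤₀. Then H = (μ + tr(D))·e + H⁰. In particular, 𝔤 is unimodular if and only if 𝔤₀ is unimodular and tr(D) = −μ. -/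
/-!
With respect to `𝔤 = ℝe ⊕ 𝔤₀ ⊕ ℝē` the trace of an endomorphism is the sum of the traces of its
three diagonal blocks. For `ad_x` with `x = ae + u + tē` these blocks are `tμ`, `tD + ad⁰_u` and `0`,
so `tr (ad_x) = t (μ + tr D) + tr (ad⁰_u)` (`trace_bracket`). This is exactly the pairing of `x` with
`(μ + tr D) e + H⁰`, so nondegeneracy of the metric gives `H`, and unimodularity is read off from the
trace formula.
-/

/-- The trace of an endomorphism of a product is the sum of the traces of its diagonal blocks. -/
theorem trace_prod_blocks {A B : Type*} [AddCommGroup A] [Module ℝ A] [FiniteDimensional ℝ A]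
    [AddCommGroup B] [Module ℝ B] [FiniteDimensional ℝ B] (F : (A × B) →ₗ[ℝ] (A × B)) :
    LinearMap.trace ℝ (A × B) F =
      LinearMap.trace ℝ A ((LinearMap.fst ℝ A B ∘ₗ F) ∘ₗ LinearMap.inl ℝ A B) +
      LinearMap.trace ℝ B ((LinearMap.snd ℝ A B ∘ₗ F) ∘ₗ LinearMap.inr ℝ A B) := by
  rw [LinearMap.trace_comp_comm' (LinearMap.inl ℝ A B),
    LinearMap.trace_comp_comm' (LinearMap.inr ℝ A B), ← map_add]
  congr 1
  ext x <;> simp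

theorem trace_real_end (F : ℝ →ₗ[ℝ] ℝ) : LinearMap.trace ℝ ℝ F = F 1 := by
  have h : F = F 1 • LinearMap.id := by ext; simp
  rw [h]
  simp

/-- The trace of `ad_x` on the double extension, for `x = ae + u + tē`. -/
theorem trace_bracket {L0 : Type*} [LieRing L0] [LieAlgebra ℝ L0] [FiniteDimensional ℝ L0]
    (g0 : LinearMap.BilinForm ℝ L0) (K D : L0 →ₗ[ℝ] L0) (μ : ℝ) (b : L0)
    (Br : (ℝ × L0 × ℝ) →ₗ[ℝ] (ℝ × L0 × ℝ) →ₗ[ℝ] (ℝ × L0 × ℝ))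
    (hBr : ∀ (a : ℝ) (u : L0) (t : ℝ) (a' : ℝ) (u' : L0) (t' : ℝ),
      Br (a, u, t) (a', u', t') =
        (t * (μ * a' + g0 b u') - t' * (μ * a + g0 b u) + g0 (K u) u',
          t • D u' - t' • D u + ⁅u, u'⁆, 0))
    (a : ℝ) (u : L0) (t : ℝ) :
    LinearMap.trace ℝ (ℝ × L0 × ℝ) (Br (a, u, t)) =
      t * (μ + LinearMap.trace ℝ L0 D) + LinearMap.trace ℝ L0 (LieAlgebra.ad ℝ L0 u) := by
  rw [trace_prod_blocks, trace_prod_blocks, trace_real_end, trace_real_end]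
  have hmid : (LinearMap.fst ℝ L0 ℝ ∘ₗ (LinearMap.snd ℝ ℝ (L0 × ℝ) ∘ₗ Br (a, u, t)) ∘ₗ
      LinearMap.inr ℝ ℝ (L0 × ℝ)) ∘ₗ LinearMap.inl ℝ L0 ℝ = t • D + LieAlgebra.ad ℝ L0 u := by
    ext v
    simp [hBr]
  rw [hmid, map_add, map_smul]
  simp [hBr]
  ring

/-- Let `𝔤 = ℝe ⊕ 𝔤₀ ⊕ ℝē` (realized as `ℝ × 𝔤₀ × ℝ` with `e = (1,0,0)`,
`ē = (0,0,1)`) be the double extension of a Euclidean Lie algebra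
`(𝔤₀, [·,·]₀, g₀)` with parameters `(K, D, μ, b)`, assumed to be a Lie algebra
(Jacobi identity).  With `H` and `H⁰` the mean curvature vectors of `𝔤` and
`𝔤₀`, one has `H = (μ + tr D)·e + H⁰`; in particular `𝔤` is unimodular iff
`𝔤₀` is unimodular and `tr D = -μ`. -/
theorem doubleExtension_mean_curvature
    {L0 : Type*} [LieRing L0] [LieAlgebra ℝ L0] [FiniteDimensional ℝ L0]
    (g0 : LinearMap.BilinForm ℝ L0)
    (hg0symm : ∀ u v, g0 u v = g0 v u)
    (hg0pos : ∀ u : L0, u ≠ 0 → 0 < g0 u u)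
    (K D : L0 →ₗ[ℝ] L0)
    (hKskew : ∀ u v, g0 (K u) v = - g0 u (K v))
    (μ : ℝ) (b : L0)
    (Br : (ℝ × L0 × ℝ) →ₗ[ℝ] (ℝ × L0 × ℝ) →ₗ[ℝ] (ℝ × L0 × ℝ))
    (hBr : ∀ (a : ℝ) (u : L0) (t : ℝ) (a' : ℝ) (u' : L0) (t' : ℝ),
      Br (a, u, t) (a', u', t') =
        (t * (μ * a' + g0 b u') - t' * (μ * a + g0 b u) + g0 (K u) u',
          t • D u' - t' • D u + ⁅u, u'⁆, 0))
    (hJac : ∀ x y z : ℝ × L0 × ℝ,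
      Br (Br x y) z + Br (Br y z) x + Br (Br z x) y = 0)
    (Bm : LinearMap.BilinForm ℝ (ℝ × L0 × ℝ))
    (hBm : ∀ (a : ℝ) (u : L0) (t : ℝ) (a' : ℝ) (u' : L0) (t' : ℝ),
      Bm (a, u, t) (a', u', t') = a * t' + t * a' + g0 u u')
    (H : ℝ × L0 × ℝ)
    (hH : ∀ x : ℝ × L0 × ℝ, Bm H x = LinearMap.trace ℝ (ℝ × L0 × ℝ) (Br x))
    (H0 : L0)
    (hH0 : ∀ v : L0, g0 H0 v = LinearMap.trace ℝ L0 (LieAlgebra.ad ℝ L0 v)) :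
    H = (μ + LinearMap.trace ℝ L0 D, H0, 0) ∧
      ((∀ x : ℝ × L0 × ℝ, LinearMap.trace ℝ (ℝ × L0 × ℝ) (Br x) = 0) ↔
        ((∀ v : L0, LinearMap.trace ℝ L0 (LieAlgebra.ad ℝ L0 v) = 0) ∧
          LinearMap.trace ℝ L0 D = -μ)) := by
  have htr := trace_bracket g0 K D μ b Br hBr
  refine ⟨?_, ?_, ?_⟩
  · obtain ⟨h1, h2, h3⟩ := H
    -- Pairing `H` with `e`, `ē` and `𝔤₀` isolates its three components.
    have e3 := hH (1, 0, 0)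
    have e1 := hH (0, 0, 1)
    have e2 : g0 (h2 - H0) (h2 - H0) = 0 := by
      have e := hH (0, h2 - H0, 0)
      rw [hBm, htr, ← hH0] at e
      rw [LinearMap.map_sub₂]
      linarith
    rw [hBm, htr] at e1 e3
    simp only [map_zero, mul_zero, mul_one, zero_mul, one_mul, add_zero, zero_add] at e1 e3
    have e2' : h2 = H0 := by
      by_contra hne
      exact (hg0pos _ (sub_ne_zero.mpr hne)).ne' e2
    rw [e1, e2', e3]
  · intro h
    refine ⟨fun v => ?_, ?_⟩
    · simpa [htr] using h (0, v, 0)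
    · have e := h (0, 0, 1)
      rw [htr, map_zero, map_zero] at e
      linarith
  · rintro ⟨h0, hD⟩ ⟨a, u, t⟩
    rw [htr, h0, hD]
    ring
end

section
/- Let (𝔤₀,[·,·]₀,⟨·,·⟩₀) be a Euclidean Lie algebra and let (𝔤,[·,·],⟨·,·⟩) be the double extension of 𝔤₀ with parameters (K,D,μ,b), assumed to be a Lie algebra. Then (𝔤,⟨·,·⟩) is Einstein if and only if (𝔤,⟨·,·⟩) is Ricci-flat, (𝔤₀,⟨·,·⟩₀) is Ricci-flat, and the following two equations hold: 4 tr(ad⁰_b) + 4μ tr(D) − 2 tr(D²) − 2 tr(D∘D*) − tr(K²) = 0, and, for all u ∈ 𝔤₀, tr(J_u⁰∘K) + 2 tr((D+D*)∘ad⁰_u) + 2 tr(ad⁰_{D*(u)}) − 2 tr(ad⁰_{K(u)}) = 0. -/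
/-!
Write `e = (1, 0, 0)` and `ē = (0, 0, 1)`, and let `ric` denote the Ricci form of the double
extension. Every trace over `ℝ × 𝔤₀ × ℝ` is the sum of the traces of its three diagonal blocks
(`trace_triple`), so `ric` can be computed explicitly. One finds `ric(e, ē) = 0`, hence an Einstein
double extension is Ricci-flat; `ric(u, v) = ric₀(u, v)` on `𝔤₀`, hence `𝔤₀` is then Ricci-flat;
`4 ric(ē, ē)` is the left-hand side of the first equation; and
`-4 ric(ē, u) = tr(J_u⁰ K) + 2 tr((D + D*) ad⁰_u) - 2 tr(ad⁰_{D* u}) - 2 tr(ad⁰_{K u})`.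

The last expression differs from the second equation in the sign of the `D*` term. This is harmless,
because a Ricci-flat Euclidean Lie algebra is unimodular (`mean_eq_zero_of_ric_self`): `J⁰_{H₀} = 0`
since `⟨H₀, [v, w]⟩ = tr ad_{[v, w]} = 0`, so with `A = ad_{H₀}` the value
`ric₀(H₀, H₀) = -½ (tr A² + tr A A*) = -¼ tr (A + A*)²` vanishes only if `A + A* = 0`, and then
`⟨H₀, H₀⟩ = tr A = 0`. The last two terms of the equation are therefore both zero.
-/

/-- The trace over `ℝ × V × ℝ` is the sum of the traces of the diagonal blocks. -/
lemma trace_triple {V : Type*} [AddCommGroup V] [Module ℝ V] [FiniteDimensional ℝ V]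
    (f : (ℝ × V × ℝ) →ₗ[ℝ] (ℝ × V × ℝ)) (p : ℝ) (T : V →ₗ[ℝ] V) (q : ℝ)
    (h1 : (f (1, 0, 0)).1 = p) (h2 : ∀ u, (f (0, u, 0)).2.1 = T u)
    (h3 : (f (0, 0, 1)).2.2 = q) :
    LinearMap.trace ℝ (ℝ × V × ℝ) f = p + LinearMap.trace ℝ V T + q := by
  classical
  let v := Module.finBasis ℝ V
  let s := Module.Basis.singleton Unit ℝ
  rw [LinearMap.trace_eq_matrix_trace ℝ (s.prod (v.prod s)), LinearMap.trace_eq_matrix_trace ℝ v]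
  simp only [Matrix.trace, Matrix.diag, LinearMap.toMatrix_apply, Fintype.sum_sum_type]
  have h1' : (f (1, 0)).1 = p := h1
  simp [s, Module.Basis.prod_apply, h1', h2, h3, add_assoc]

/-- In a basis orthogonal for `g`, the trace is the sum of the normalized diagonal entries. -/
lemma exists_trace_formula {V : Type*} [AddCommGroup V] [Module ℝ V] [FiniteDimensional ℝ V]
    (g : LinearMap.BilinForm ℝ V) (hs : ∀ u v, g u v = g v u)
    (hp : ∀ u : V, u ≠ 0 → 0 < g u u) :
    ∃ v : Module.Basis (Fin (Module.finrank ℝ V)) ℝ V,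
      ∀ T : V →ₗ[ℝ] V, LinearMap.trace ℝ V T = ∑ i, g (T (v i)) (v i) / g (v i) (v i) := by
  classical
  obtain ⟨v, hv⟩ := LinearMap.BilinForm.exists_orthogonal_basis (B := g) ⟨fun u w => hs u w⟩
  refine ⟨v, fun T => ?_⟩
  rw [LinearMap.trace_eq_matrix_trace ℝ v]
  simp only [Matrix.trace, Matrix.diag, LinearMap.toMatrix_apply]
  refine Finset.sum_congr rfl fun i _ => ?_
  have hpos := hp (v i) (v.ne_zero i)
  rw [eq_div_iff hpos.ne']
  conv_rhs => rw [← v.sum_repr (T (v i))]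
  rw [map_sum, LinearMap.sum_apply, Finset.sum_eq_single i]
  · simp
  · intro j _ hj
    have h0 : g (v j) (v i) = 0 := hv hj
    simp [h0]
  · simp

lemma trace_adjoint {V : Type*} [AddCommGroup V] [Module ℝ V] [FiniteDimensional ℝ V]
    (g : LinearMap.BilinForm ℝ V) (hs : ∀ u v, g u v = g v u)
    (hp : ∀ u : V, u ≠ 0 → 0 < g u u) (T S : V →ₗ[ℝ] V)
    (h : ∀ u v, g (T u) v = g u (S v)) : LinearMap.trace ℝ V T = LinearMap.trace ℝ V S := by
  obtain ⟨v, hv⟩ := exists_trace_formula g hs hp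
  rw [hv, hv]
  exact Finset.sum_congr rfl fun i _ => by rw [h, hs]

/-- If `tr A² + tr A A* = 0` then the symmetric part of `A` vanishes, and so does `tr A`. -/
lemma trace_eq_zero_of_symm_part {V : Type*} [AddCommGroup V] [Module ℝ V] [FiniteDimensional ℝ V]
    (g : LinearMap.BilinForm ℝ V) (hs : ∀ u v, g u v = g v u)
    (hp : ∀ u : V, u ≠ 0 → 0 < g u u) (A B : V →ₗ[ℝ] V)
    (h : ∀ u v, g (A u) v = g u (B v))
    (h0 : LinearMap.trace ℝ V (A ∘ₗ A) + LinearMap.trace ℝ V (A ∘ₗ B) = 0) :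
    LinearMap.trace ℝ V A = 0 := by
  have h' : ∀ u v, g (B u) v = g u (A v) := fun u v => by rw [hs, ← h, hs]
  have hBB : LinearMap.trace ℝ V (B ∘ₗ B) = LinearMap.trace ℝ V (A ∘ₗ A) :=
    trace_adjoint g hs hp _ _ fun u v => by simp [h']
  have hBA : LinearMap.trace ℝ V (B ∘ₗ A) = LinearMap.trace ℝ V (A ∘ₗ B) :=
    LinearMap.trace_comp_comm' A B
  have hS : LinearMap.trace ℝ V ((A + B) ∘ₗ (A + B)) = 0 := by
    simp only [LinearMap.add_comp, LinearMap.comp_add, map_add]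
    linarith
  have hself : ∀ u v, g ((A + B) u) v = g u ((A + B) v) := fun u v => by
    simp [h, h']; ring
  have hAB := trace_adjoint g hs hp A B h
  obtain ⟨v, hv⟩ := exists_trace_formula g hs hp
  rw [hv] at hS
  have hnn : ∀ x, 0 ≤ g x x := fun x => by
    by_cases hx : x = 0
    · simp [hx]
    · exact (hp x hx).le
  have hz := (Finset.sum_eq_zero_iff_of_nonneg (fun i _ => by
    rw [LinearMap.comp_apply, hself]
    exact div_nonneg (hnn _) (hnn _))).1 hS
  have hzero : A + B = 0 := by
    refine v.ext fun i => ?_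
    by_contra hne
    have h1 := hz i (Finset.mem_univ i)
    rw [LinearMap.comp_apply, hself] at h1
    exact (div_pos (hp _ hne) (hp _ (v.ne_zero i))).ne' h1
  have ht := congrArg (LinearMap.trace ℝ V) hzero
  rw [map_add, map_zero] at ht
  linarith

/-- A Euclidean Lie algebra whose Ricci form vanishes on `H₀` is unimodular. -/
lemma mean_eq_zero_of_ric_self
    {L0 : Type*} [LieRing L0] [LieAlgebra ℝ L0] [FiniteDimensional ℝ L0]
    (g0 : LinearMap.BilinForm ℝ L0)
    (hs : ∀ u v, g0 u v = g0 v u) (hp : ∀ u : L0, u ≠ 0 → 0 < g0 u u)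
    (adStar0 : L0 → (L0 →ₗ[ℝ] L0))
    (hadStar0 : ∀ v x y, g0 ⁅v, x⁆ y = g0 x (adStar0 v y))
    (J0 : L0 → (L0 →ₗ[ℝ] L0)) (hJ0 : ∀ u v, J0 u v = adStar0 v u)
    (H0 : L0) (hH0 : ∀ v : L0, g0 H0 v = LinearMap.trace ℝ L0 (LieAlgebra.ad ℝ L0 v))
    (hric : -(1/2) * LinearMap.trace ℝ L0 (LieAlgebra.ad ℝ L0 H0 ∘ₗ LieAlgebra.ad ℝ L0 H0)
      - (1/2) * LinearMap.trace ℝ L0 (LieAlgebra.ad ℝ L0 H0 ∘ₗ adStar0 H0)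
      - (1/4) * LinearMap.trace ℝ L0 (J0 H0 ∘ₗ J0 H0) = 0) :
    H0 = 0 := by
  have hlie : ∀ v w : L0, LieAlgebra.ad ℝ L0 ⁅v, w⁆ =
      LieAlgebra.ad ℝ L0 v ∘ₗ LieAlgebra.ad ℝ L0 w -
        LieAlgebra.ad ℝ L0 w ∘ₗ LieAlgebra.ad ℝ L0 v := fun v w => by
    ext x
    simp
  have hJ : J0 H0 = 0 := by
    ext v
    by_contra hne
    refine (hp _ hne).ne' ?_
    rw [hJ0, ← hadStar0, hs, hH0, hlie, map_sub, LinearMap.trace_comp_comm', sub_self]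
  rw [hJ] at hric
  simp only [LinearMap.zero_comp, map_zero] at hric
  by_contra hne
  refine (hp _ hne).ne' ?_
  rw [hH0]
  exact trace_eq_zero_of_symm_part g0 hs hp _ (adStar0 H0) (fun u v => by simp [hadStar0])
    (by linarith)


/-- The double extension `𝔤 = ℝe ⊕ 𝔤₀ ⊕ ℝē` (realized as `ℝ × 𝔤₀ × ℝ`) of a
Euclidean Lie algebra `(𝔤₀, [·,·]₀, g₀)` with parameters `(K, D, μ, b)` is
Einstein iff it is Ricci-flat, `𝔤₀` is Ricci-flat, and
`4tr(ad⁰_b) + 4μ tr D − 2tr(D²) − 2tr(DD*) − tr(K²) = 0` and, for all `u`,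
`tr(J_u⁰∘K) + 2tr((D+D*)∘ad⁰_u) + 2tr(ad⁰_{D*u}) − 2tr(ad⁰_{Ku}) = 0`. -/
theorem doubleExtension_einstein_iff
    {L0 : Type*} [LieRing L0] [LieAlgebra ℝ L0] [FiniteDimensional ℝ L0]
    (g0 : LinearMap.BilinForm ℝ L0)
    (hg0symm : ∀ u v, g0 u v = g0 v u)
    (hg0pos : ∀ u : L0, u ≠ 0 → 0 < g0 u u)
    (K D : L0 →ₗ[ℝ] L0)
    (hKskew : ∀ u v, g0 (K u) v = - g0 u (K v))
    (μ : ℝ) (b : L0)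
    (Br : (ℝ × L0 × ℝ) →ₗ[ℝ] (ℝ × L0 × ℝ) →ₗ[ℝ] (ℝ × L0 × ℝ))
    (hBr : ∀ (a : ℝ) (u : L0) (t : ℝ) (a' : ℝ) (u' : L0) (t' : ℝ),
      Br (a, u, t) (a', u', t') =
        (t * (μ * a' + g0 b u') - t' * (μ * a + g0 b u) + g0 (K u) u',
          t • D u' - t' • D u + ⁅u, u'⁆, 0))
    (hJac : ∀ x y z : ℝ × L0 × ℝ,
      Br (Br x y) z + Br (Br y z) x + Br (Br z x) y = 0)
    (Bm : LinearMap.BilinForm ℝ (ℝ × L0 × ℝ))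
    (hBm : ∀ (a : ℝ) (u : L0) (t : ℝ) (a' : ℝ) (u' : L0) (t' : ℝ),
      Bm (a, u, t) (a', u', t') = a * t' + t * a' + g0 u u')
    -- the adjoint of `D` with respect to `g₀`
    (Dstar : L0 →ₗ[ℝ] L0)
    (hDstar : ∀ u v, g0 (D u) v = g0 u (Dstar v))
    -- Ricci data of the double extension `(𝔤, Bm)`
    (adStarM : (ℝ × L0 × ℝ) → ((ℝ × L0 × ℝ) →ₗ[ℝ] (ℝ × L0 × ℝ)))
    (hadStarM : ∀ v x y : ℝ × L0 × ℝ, Bm (Br v x) y = Bm x (adStarM v y))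
    (JM : (ℝ × L0 × ℝ) → ((ℝ × L0 × ℝ) →ₗ[ℝ] (ℝ × L0 × ℝ)))
    (hJM : ∀ u v : ℝ × L0 × ℝ, JM u v = adStarM v u)
    (H : ℝ × L0 × ℝ)
    (hH : ∀ x : ℝ × L0 × ℝ, Bm H x = LinearMap.trace ℝ (ℝ × L0 × ℝ) (Br x))
    (RicM : (ℝ × L0 × ℝ) →ₗ[ℝ] (ℝ × L0 × ℝ))
    (hRicM : ∀ u v : ℝ × L0 × ℝ, Bm (RicM u) v =
      -(1/2) * LinearMap.trace ℝ (ℝ × L0 × ℝ) (Br u ∘ₗ Br v)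
      - (1/2) * LinearMap.trace ℝ (ℝ × L0 × ℝ) (Br u ∘ₗ adStarM v)
      - (1/4) * LinearMap.trace ℝ (ℝ × L0 × ℝ) (JM u ∘ₗ JM v)
      - (1/2) * Bm (Br H u) v - (1/2) * Bm (Br H v) u)
    -- Ricci data of the Euclidean Lie algebra `(𝔤₀, g₀)`
    (adStar0 : L0 → (L0 →ₗ[ℝ] L0))
    (hadStar0 : ∀ v x y, g0 ⁅v, x⁆ y = g0 x (adStar0 v y))
    (J0 : L0 → (L0 →ₗ[ℝ] L0))
    (hJ0 : ∀ u v, J0 u v = adStar0 v u)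
    (H0 : L0)
    (hH0 : ∀ v : L0, g0 H0 v = LinearMap.trace ℝ L0 (LieAlgebra.ad ℝ L0 v))
    (Ric0 : L0 →ₗ[ℝ] L0)
    (hRic0 : ∀ u v, g0 (Ric0 u) v =
      -(1/2) * LinearMap.trace ℝ L0 (LieAlgebra.ad ℝ L0 u ∘ₗ LieAlgebra.ad ℝ L0 v)
      - (1/2) * LinearMap.trace ℝ L0 (LieAlgebra.ad ℝ L0 u ∘ₗ adStar0 v)
      - (1/4) * LinearMap.trace ℝ L0 (J0 u ∘ₗ J0 v)
      - (1/2) * g0 ⁅H0, u⁆ v - (1/2) * g0 ⁅H0, v⁆ u) :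
    (∃ lam : ℝ, RicM = lam • LinearMap.id) ↔
      (RicM = 0 ∧ Ric0 = 0 ∧
        4 * LinearMap.trace ℝ L0 (LieAlgebra.ad ℝ L0 b)
          + 4 * μ * LinearMap.trace ℝ L0 D
          - 2 * LinearMap.trace ℝ L0 (D ∘ₗ D)
          - 2 * LinearMap.trace ℝ L0 (D ∘ₗ Dstar)
          - LinearMap.trace ℝ L0 (K ∘ₗ K) = 0 ∧
        ∀ u : L0, LinearMap.trace ℝ L0 (J0 u ∘ₗ K)
          + 2 * LinearMap.trace ℝ L0 ((D + Dstar) ∘ₗ LieAlgebra.ad ℝ L0 u)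
          + 2 * LinearMap.trace ℝ L0 (LieAlgebra.ad ℝ L0 (Dstar u))
          - 2 * LinearMap.trace ℝ L0 (LieAlgebra.ad ℝ L0 (K u)) = 0) := by
  have nd0 : ∀ y y' : L0, (∀ x, g0 x y = g0 x y') → y = y' := fun y y' h => by
    by_contra hne
    have := hg0pos (y - y') (sub_ne_zero.2 hne)
    rw [map_sub, h, sub_self] at this
    exact this.ne rfl
  have h0 : ∀ w, adStar0 0 w = 0 := fun w =>
    nd0 _ _ fun x => by rw [← hadStar0]; simp
  have nd : ∀ y y' : ℝ × L0 × ℝ, (∀ x, Bm x y = Bm x y') → y = y' := by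
    rintro ⟨a, u, t⟩ ⟨a', u', t'⟩ h
    have h1 := h (1, 0, 0)
    have h2 := h (0, 0, 1)
    have h3 : ∀ x, g0 x u = g0 x u' := fun x => by simpa [hBm] using h (0, x, 0)
    simp only [hBm] at h1 h2
    simp at h1 h2
    rw [h1, h2, nd0 _ _ h3]
  -- the adjoint of `ad_(a,w,t)`
  have adF : ∀ a w t a' w' t', adStarM (a, w, t) (a', w', t') =
      (-(t' * (μ * a + g0 b w)) - g0 (D w) w', t' • (t • b + K w) + t • Dstar w' + adStar0 w w',
        t * μ * t') := by
    intro a w t a' w' t'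
    refine nd _ _ ?_
    rintro ⟨x, y, z⟩
    rw [← hadStarM, hBr, hBm, hBm]
    simp only [map_add, map_sub, map_smul, LinearMap.add_apply, LinearMap.sub_apply,
      LinearMap.smul_apply, smul_eq_mul, ← hadStar0, ← hDstar, hg0symm y b, hg0symm y (K w)]
    ring
  have HF : H = (μ + LinearMap.trace ℝ L0 D, H0, 0) := by
    refine nd _ _ ?_
    rintro ⟨a, u, t⟩
    have hsym : ∀ x y, Bm x y = Bm y x := by
      rintro ⟨a, u, t⟩ ⟨a', u', t'⟩
      rw [hBm, hBm, hg0symm]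
      ring
    rw [hsym, hH, hBm, hg0symm, hH0,
      trace_triple _ (t * μ) (t • D + LieAlgebra.ad ℝ L0 u) 0 (by simp [hBr]) (by simp [hBr])
        (by simp [hBr])]
    simp
    ring
  have trStar : ∀ u, LinearMap.trace ℝ L0 (D ∘ₗ adStar0 u) =
      LinearMap.trace ℝ L0 (Dstar ∘ₗ LieAlgebra.ad ℝ L0 u) := fun u => by
    rw [LinearMap.trace_comp_comm' (adStar0 u) D]
    refine (trace_adjoint g0 hg0symm hg0pos _ _ fun x y => ?_).symm
    have : ∀ x y, g0 (Dstar x) y = g0 x (D y) := fun x y => by rw [hg0symm, ← hDstar, hg0symm]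
    simp [hadStar0, this]
  have ric_e : Bm (RicM (1, 0, 0)) (0, 0, 1) = 0 := by
    rw [hRicM, HF,
      trace_triple _ 0 0 0 (by simp [hBr]) (by simp [hBr]) (by simp [hBr]),
      trace_triple _ 0 0 0 (by simp [hBr, adF]) (by simp [hBr, adF]) (by simp [hBr, adF]),
      trace_triple _ 0 0 0 (by simp [hJM, adF]) (by simp [hJM, adF]) (by simp [hJM, adF])]
    simp [hBr, hBm]
  have ric_uv : ∀ u v, Bm (RicM (0, u, 0)) (0, v, 0) = g0 (Ric0 u) v := by
    intro u v
    rw [hRicM, hRic0, HF,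
      trace_triple _ 0 (LieAlgebra.ad ℝ L0 u ∘ₗ LieAlgebra.ad ℝ L0 v) 0
        (by simp [hBr]) (by simp [hBr]) (by simp [hBr]),
      trace_triple _ 0 (LieAlgebra.ad ℝ L0 u ∘ₗ adStar0 v) 0
        (by simp [hBr, adF]) (by simp [hBr, adF]) (by simp [hBr, adF]),
      trace_triple _ 0 (J0 u ∘ₗ J0 v) 0
        (by simp [hJM, adF, h0]) (by simp [hJM, adF, hJ0]) (by simp [hJM, adF])]
    simp [hBr, hBm]
  have ric_bb : 4 * Bm (RicM (0, 0, 1)) (0, 0, 1) =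
      4 * LinearMap.trace ℝ L0 (LieAlgebra.ad ℝ L0 b)
          + 4 * μ * LinearMap.trace ℝ L0 D
          - 2 * LinearMap.trace ℝ L0 (D ∘ₗ D)
          - 2 * LinearMap.trace ℝ L0 (D ∘ₗ Dstar)
          - LinearMap.trace ℝ L0 (K ∘ₗ K) := by
    rw [hRicM, HF,
      trace_triple _ (μ * μ) (D ∘ₗ D) 0 (by simp [hBr]) (by simp [hBr]) (by simp [hBr]),
      trace_triple _ 0 (D ∘ₗ Dstar) 0
        (by simp [hBr, adF, h0]) (by simp [hBr, adF, h0]) (by simp [hBr, adF]),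
      trace_triple _ (μ * μ) (K ∘ₗ K) (μ * μ)
        (by simp [hJM, adF, h0]) (by simp [hJM, adF]) (by simp [hJM, adF]),
      ← hH0, hg0symm H0 b]
    simp [hBr, hBm]
    ring
  have ric_bu : ∀ u, -4 * Bm (RicM (0, 0, 1)) (0, u, 0) =
      LinearMap.trace ℝ L0 (J0 u ∘ₗ K)
          + 2 * LinearMap.trace ℝ L0 ((D + Dstar) ∘ₗ LieAlgebra.ad ℝ L0 u)
          - 2 * LinearMap.trace ℝ L0 (LieAlgebra.ad ℝ L0 (Dstar u))
          - 2 * LinearMap.trace ℝ L0 (LieAlgebra.ad ℝ L0 (K u)) := by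
    intro u
    rw [hRicM, HF,
      trace_triple _ 0 (D ∘ₗ LieAlgebra.ad ℝ L0 u) 0
        (by simp [hBr]) (by simp [hBr]) (by simp [hBr]),
      trace_triple _ 0 (D ∘ₗ adStar0 u) 0
        (by simp [hBr, adF]) (by simp [hBr, adF]) (by simp [hBr, adF]),
      trace_triple _ 0 (K ∘ₗ J0 u) 0
        (by simp [hJM, adF, h0]) (by simp [hJM, adF, hJ0]) (by simp [hJM, adF]),
      ← hH0, ← hH0, trStar, LinearMap.trace_comp_comm' (J0 u) K, ← hDstar]
    simp [hBr, hBm, hKskew, LinearMap.add_comp]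
    ring
  constructor
  · rintro ⟨lam, hlam⟩
    have hl : lam = 0 := by
      rw [hlam] at ric_e
      simpa [hBm] using ric_e
    have hR : RicM = 0 := by rw [hlam, hl, zero_smul]
    have hR0 : Ric0 = 0 := by
      ext u
      by_contra hne
      refine (hg0pos _ hne).ne' ?_
      rw [← ric_uv, hR]
      simp
    have hH00 : H0 = 0 := by
      refine mean_eq_zero_of_ric_self g0 hg0symm hg0pos adStar0 hadStar0 J0 hJ0 H0 hH0 ?_
      have := hRic0 H0 H0
      simp only [hR0, LinearMap.zero_apply, map_zero, lie_self] at this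
      linarith
    refine ⟨hR, hR0, ?_, fun u => ?_⟩
    · rw [← ric_bb, hR]
      simp
    · have h1 := ric_bu u
      have h2 := hH0 (Dstar u)
      rw [hR] at h1
      simp only [hH00, LinearMap.zero_apply, map_zero, mul_zero] at h1 h2
      linarith
  · rintro ⟨hR, -⟩
    exact ⟨0, by rw [hR, zero_smul]⟩
end
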